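/- Let 1<q,r<∞ and h∈L^r(−1,0;L^q(ℝ²)). For x∈ℝ³₊ and t∈(−1,0) define w(x,t) = ∫_{−1}^{t} ∫_{ℝ²} ∂_{x₃}Γ(x'−y', x₃, t−s) h(y',s) dy' ds. Then there is a constant C depending only on q and r such that ‖w‖_{L^{q,r}(ℝ³₊×(−1,0))} ≤ C ‖h‖_{L^r(−1,0;L^q(ℝ²))}. -/

import Mathlib

/-!
For `x₃ > 0` and `τ > 0` the kernel factorises as `|∂₃Γ(x', x₃, τ)| = kN(x₃, τ) gT(x', τ)`, where
`gT` is the two-dimensional heat kernel, of integral one, and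
`kN(z, τ) = z/(2τ) (4πτ)^{-1/2} e^{-z²/(4τ)}`.

Convolution with `gT` is a contraction on `L^q(ℝ²)`, and a Gamma integral gives
`‖kN(·, τ)‖_{L^q(0,∞)} = c τ^{1/(2q) - 1}`. Hence a single time slice `h(·, s)` contributes to
`w(·, t)` a function of `L^q(ℝ³₊)` norm at most `c (t-s)^{1/(2q) - 1} ‖h(s)‖_q`
(`lintegral_layer_rpow_le`). Minkowski's integral inequality (`lintegral_lintegral_rpow_le`) gives
`‖w(t)‖_q ≤ ∫ c (t-s)^{1/(2q) - 1} ‖h(s)‖_q ds` (`lintegral_sum_layer_le`). As `1/(2q) - 1 > -1`,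
the time kernel is integrable on `(0,1)`, and Young's inequality in time
(`lintegral_conv_rpow_le`) concludes, with the `L¹` norm of the time kernel as constant.

All estimates are carried out for Lebesgue integrals in `ℝ≥0∞`; a Bochner integral of a nonnegative
function is always bounded by the corresponding Lebesgue integral, so neither the integrability nor
the measurability of `w` has to be discussed.
-/

open MeasureTheory Set Filter

noncomputable section

/-- ℝ³ with the Euclidean structure. -/
abbrev V3 : Type := EuclideanSpace ℝ (Fin 3)

/-- The `j`-th coordinate vector of ℝ³. -/
def e3 (j : Fin 3) : V3 := EuclideanSpace.single j (1 : ℝ)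

/-- The partial derivative `∂_j f` of a scalar function on ℝ³. -/
def pd (j : Fin 3) (f : V3 → ℝ) (x : V3) : ℝ := fderiv ℝ f x (e3 j)

/-- The point `(a,b,c)` of ℝ³. -/
def mk3 (a b c : ℝ) : V3 := (WithLp.equiv 2 (Fin 3 → ℝ)).symm ![a, b, c]

/-- The reflected point `x* = (x', -x₃)`. -/
def refl3 (x : V3) : V3 := mk3 (x 0) (x 1) (-(x 2))

/-- Signs for the even-even-odd extension. -/
def sgn3 (i : Fin 3) : ℝ := if i = 2 then -1 else 1

/-- The open upper half space ℝ³₊. -/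
def Hplus : Set V3 := {x : V3 | 0 < x 2}

/-- The half cylinder C₊(R) = B'(R) × (0,R). -/
def Cplus (R : ℝ) : Set V3 := {x : V3 | (x 0)^2 + (x 1)^2 < R^2 ∧ 0 < x 2 ∧ x 2 < R}

/-- The full cylinder C(R) = B'(R) × (-R,R). -/
def Ccyl (R : ℝ) : Set V3 := {x : V3 | (x 0)^2 + (x 1)^2 < R^2 ∧ -R < x 2 ∧ x 2 < R}

/-- The flat boundary disk Γ(R) = B'(R) × {0}. -/
def Gam (R : ℝ) : Set V3 := {x : V3 | (x 0)^2 + (x 1)^2 < R^2 ∧ x 2 = 0}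

/-- The time interval (-R², 0), so that Q₊(R) = C₊(R) × TI R. -/
def TI (R : ℝ) : Set ℝ := Ioo (-(R^2)) 0

/-- Divergence of a vector field on ℝ³. -/
def vdiv (v : V3 → V3) (x : V3) : ℝ := ∑ j, pd j (fun y => v y j) x

/-- Laplacian of a scalar function on ℝ³. -/
def lap (f : V3 → ℝ) (x : V3) : ℝ := ∑ j, pd j (fun y => pd j f y) x

/-- Curl of a vector field on ℝ³. -/
def curl3 (v : V3 → V3) (x : V3) : V3 :=
  mk3 (pd 1 (fun y => v y 2) x - pd 2 (fun y => v y 1) x)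
      (pd 2 (fun y => v y 0) x - pd 0 (fun y => v y 2) x)
      (pd 0 (fun y => v y 1) x - pd 1 (fun y => v y 0) x)

/-- Membership in the mixed Lebesgue space L^r(I; L^q(Ω)):
joint measurability, a.e.-in-time q-integrability in space, and
r/q-integrability in time of the spatial integrals. -/
def MemLqr {X E : Type*} [MeasureSpace X] [NormedAddCommGroup E]
    (q r : ℝ) (Ω : Set X) (I : Set ℝ) (u : ℝ → X → E) : Prop :=
  AEStronglyMeasurable (fun p : ℝ × X => u p.1 p.2)
      ((volume.restrict I).prod (volume.restrict Ω)) ∧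
  (∀ᵐ t ∂(volume.restrict I), IntegrableOn (fun x => ‖u t x‖ ^ q) Ω) ∧
  IntegrableOn (fun t => (∫ x in Ω, ‖u t x‖ ^ q) ^ (r / q)) I

/-- The mixed Lebesgue norm ‖u‖_{L^{q,r}(Ω × I)} = ‖ t ↦ ‖u(·,t)‖_{L^q(Ω)} ‖_{L^r(I)}. -/
def LqrNorm {X E : Type*} [MeasureSpace X] [NormedAddCommGroup E]
    (q r : ℝ) (Ω : Set X) (I : Set ℝ) (u : ℝ → X → E) : ℝ :=
  (∫ t in I, (∫ x in Ω, ‖u t x‖ ^ q) ^ (r / q)) ^ (1 / r)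

/-- Test fields for very weak solutions: divergence-free C^{2,1} fields compactly
supported in Q₊(R) ∪ Σ_R satisfying the Navier boundary condition (3.3). -/
structure IsTestVW (R α : ℝ) (Φ : ℝ → V3 → V3) : Prop where
  smooth : ContDiff ℝ 2 (fun p : ℝ × V3 => Φ p.1 p.2)
  supp : tsupport (fun p : ℝ × V3 => Φ p.1 p.2) ⊆ (TI R) ×ˢ (Cplus R ∪ Gam R)
  divfree : ∀ t x, vdiv (Φ t) x = 0
  bc12 : ∀ (t : ℝ) (x : V3), x 2 = 0 → ∀ k : Fin 3, k ≠ 2 →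
    pd 2 (fun y => Φ t y k) x - α * Φ t x k = 0
  bc3 : ∀ (t : ℝ) (x : V3), x 2 = 0 → Φ t x 2 = 0

/-- Test fields for weak solutions: divergence-free C¹ fields compactly supported
in Q₊(R) ∪ Σ_R with vanishing normal component on the flat boundary. -/
structure IsTestW (R : ℝ) (Φ : ℝ → V3 → V3) : Prop where
  smooth : ContDiff ℝ 1 (fun p : ℝ × V3 => Φ p.1 p.2)
  supp : tsupport (fun p : ℝ × V3 => Φ p.1 p.2) ⊆ (TI R) ×ˢ (Cplus R ∪ Gam R)
  divfree : ∀ t x, vdiv (Φ t) x = 0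
  bc3 : ∀ (t : ℝ) (x : V3), x 2 = 0 → Φ t x 2 = 0

/-- Test fields for weak solution pairs: C¹ fields compactly supported
in Q₊(R) ∪ Σ_R with vanishing normal component on the flat boundary
(not necessarily divergence free). -/
structure IsTestP (R : ℝ) (Φ : ℝ → V3 → V3) : Prop where
  smooth : ContDiff ℝ 1 (fun p : ℝ × V3 => Φ p.1 p.2)
  supp : tsupport (fun p : ℝ × V3 => Φ p.1 p.2) ⊆ (TI R) ×ˢ (Cplus R ∪ Gam R)
  bc3 : ∀ (t : ℝ) (x : V3), x 2 = 0 → Φ t x 2 = 0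

/-- Smooth scalar test functions compactly supported in the interior of Q₊(R). -/
def IsIntTest (R : ℝ) (χ : ℝ → V3 → ℝ) : Prop :=
  ContDiff ℝ (⊤ : ℕ∞) (fun p : ℝ × V3 => χ p.1 p.2) ∧
  tsupport (fun p : ℝ × V3 => χ p.1 p.2) ⊆ (TI R) ×ˢ (Cplus R)

/-- `du` is the (spatial) weak gradient of `u` in Q₊(R): (du)_{ij} = ∂_j u_i. -/
def IsWeakGrad (R : ℝ) (u : ℝ → V3 → V3) (du : ℝ → V3 → Fin 3 → Fin 3 → ℝ) : Prop :=
  ∀ χ, IsIntTest R χ → ∀ i j : Fin 3,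
    (∫ t in TI R, ∫ x in Cplus R, du t x i j * χ t x) =
      -(∫ t in TI R, ∫ x in Cplus R, u t x i * pd j (χ t) x)

/-- `u(·,t)` is divergence free in C₊(R) with vanishing normal trace on the flat
boundary, expressed via (2.10): ∫ u·∇Ψ = 0 for all Ψ ∈ C¹_c(C₊(R) ∪ Γ_R). -/
def NormalBC (R : ℝ) (u : ℝ → V3 → V3) : Prop :=
  ∀ᵐ t ∂(volume.restrict (TI R)), ∀ Ψ : V3 → ℝ, ContDiff ℝ 1 Ψ →
    tsupport Ψ ⊆ Cplus R ∪ Gam R →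
    (∫ x in Cplus R, ∑ j, u t x j * pd j Ψ x) = 0

/-- Very weak solution of the Stokes system in Q₊(R) with Navier boundary
condition with friction coefficient α on the flat boundary (Definition 2.4). -/
structure IsVeryWeakSol (R α : ℝ) (u f : ℝ → V3 → V3)
    (F : ℝ → V3 → Fin 3 → Fin 3 → ℝ) : Prop where
  intu : IntegrableOn (fun p : ℝ × V3 => u p.1 p.2) ((TI R) ×ˢ (Cplus R))
  intf : IntegrableOn (fun p : ℝ × V3 => f p.1 p.2) ((TI R) ×ˢ (Cplus R))
  intF : IntegrableOn (fun p : ℝ × V3 => F p.1 p.2) ((TI R) ×ˢ (Cplus R))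
  normal : NormalBC R u
  eq : ∀ Φ, IsTestVW R α Φ →
    -(∫ t in TI R, ∫ x in Cplus R,
        ∑ i, u t x i * (deriv (fun s => Φ s x i) t + lap (fun y => Φ t y i) x)) =
      ∫ t in TI R, ∫ x in Cplus R,
        ((∑ i, f t x i * Φ t x i) - ∑ i, ∑ j, F t x i j * pd j (fun y => Φ t y i) x)

/-- Weak solution of the Stokes system in Q₊(R) with Navier boundary condition
with friction coefficient α on the flat boundary (Definition 2.5); `du` is the
weak spatial gradient of `u`.  The boundary term α ∬_Σ u_k Φ_k is expressed,
via the Gauss–Green formula ∬_Σ u_k Φ_k = -∬_{Q₊} ∂₃(u_k Φ_k), in terms of the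
weak gradient, which avoids invoking a trace operator. -/
structure IsWeakSol (R α : ℝ) (u : ℝ → V3 → V3) (du : ℝ → V3 → Fin 3 → Fin 3 → ℝ)
    (f : ℝ → V3 → V3) (F : ℝ → V3 → Fin 3 → Fin 3 → ℝ) : Prop where
  intu : IntegrableOn (fun p : ℝ × V3 => u p.1 p.2) ((TI R) ×ˢ (Cplus R))
  intdu : IntegrableOn (fun p : ℝ × V3 => du p.1 p.2) ((TI R) ×ˢ (Cplus R))
  intf : IntegrableOn (fun p : ℝ × V3 => f p.1 p.2) ((TI R) ×ˢ (Cplus R))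
  intF : IntegrableOn (fun p : ℝ × V3 => F p.1 p.2) ((TI R) ×ˢ (Cplus R))
  grad : IsWeakGrad R u du
  normal : NormalBC R u
  eq : ∀ Φ, IsTestW R Φ →
    ((∫ t in TI R, ∫ x in Cplus R,
        (-(∑ i, u t x i * deriv (fun s => Φ s x i) t)
          + ∑ i, ∑ j, du t x i j * pd j (fun y => Φ t y i) x))
      - α * ∑ k : Fin 2, ∫ t in TI R, ∫ x in Cplus R,
          (du t x (Fin.castSucc k) 2 * Φ t x (Fin.castSucc k)
            + u t x (Fin.castSucc k) * pd 2 (fun y => Φ t y (Fin.castSucc k)) x))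
    = ∫ t in TI R, ∫ x in Cplus R,
        ((∑ i, f t x i * Φ t x i) - ∑ i, ∑ j, F t x i j * pd j (fun y => Φ t y i) x)

/-- Weak solution pair (u, pr) of the Stokes system in Q₊(R) with Navier
boundary condition with friction coefficient α on the flat boundary
(Definition 2.6); `du` is the weak spatial gradient of `u`, and the boundary
term is expressed as in `IsWeakSol`. -/
structure IsWeakSolPair (R α : ℝ) (u : ℝ → V3 → V3) (du : ℝ → V3 → Fin 3 → Fin 3 → ℝ)
    (pr : ℝ → V3 → ℝ) (f : ℝ → V3 → V3) (F : ℝ → V3 → Fin 3 → Fin 3 → ℝ) : Prop where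
  intu : IntegrableOn (fun p : ℝ × V3 => u p.1 p.2) ((TI R) ×ˢ (Cplus R))
  intdu : IntegrableOn (fun p : ℝ × V3 => du p.1 p.2) ((TI R) ×ˢ (Cplus R))
  intpr : IntegrableOn (fun p : ℝ × V3 => pr p.1 p.2) ((TI R) ×ˢ (Cplus R))
  intf : IntegrableOn (fun p : ℝ × V3 => f p.1 p.2) ((TI R) ×ˢ (Cplus R))
  intF : IntegrableOn (fun p : ℝ × V3 => F p.1 p.2) ((TI R) ×ˢ (Cplus R))
  grad : IsWeakGrad R u du
  normal : NormalBC R u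
  eq : ∀ Φ, IsTestP R Φ →
    ((∫ t in TI R, ∫ x in Cplus R,
        (-(∑ i, u t x i * deriv (fun s => Φ s x i) t)
          + (∑ i, ∑ j, du t x i j * pd j (fun y => Φ t y i) x)
          - pr t x * vdiv (Φ t) x))
      - α * ∑ k : Fin 2, ∫ t in TI R, ∫ x in Cplus R,
          (du t x (Fin.castSucc k) 2 * Φ t x (Fin.castSucc k)
            + u t x (Fin.castSucc k) * pd 2 (fun y => Φ t y (Fin.castSucc k)) x))
    = ∫ t in TI R, ∫ x in Cplus R,
        ((∑ i, f t x i * Φ t x i) - ∑ i, ∑ j, F t x i j * pd j (fun y => Φ t y i) x)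

/-- A mollifier: smooth, radial, supported in the unit ball, with integral 1. -/
def IsMollifier (η : V3 → ℝ) : Prop :=
  ContDiff ℝ (⊤ : ℕ∞) η ∧ tsupport η ⊆ Metric.closedBall 0 1 ∧
  (∀ x y : V3, ‖x‖ = ‖y‖ → η x = η y) ∧ (∫ x : V3, η x) = 1

/-- Rescaled mollifier η_ε(x) = ε⁻³ η(x/ε). -/
def mol (η : V3 → ℝ) (ε : ℝ) (x : V3) : ℝ := (ε ^ 3)⁻¹ * η (ε⁻¹ • x)

/-- Kernel η_ε⁺(x,y) = η_ε(x-y) + η_ε(x-y*). -/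
def molP (η : V3 → ℝ) (ε : ℝ) (x y : V3) : ℝ := mol η ε (x - y) + mol η ε (x - refl3 y)

/-- Kernel η_ε⁻(x,y) = η_ε(x-y) - η_ε(x-y*). -/
def molM (η : V3 → ℝ) (ε : ℝ) (x y : V3) : ℝ := mol η ε (x - y) - mol η ε (x - refl3 y)

/-- The mollified even extension E⁺(g). -/
def Ep (η : V3 → ℝ) (ε : ℝ) (g : V3 → ℝ) (x : V3) : ℝ := ∫ y in Hplus, g y * molP η ε x y

/-- The mollified odd extension E⁻(g). -/
def Em (η : V3 → ℝ) (ε : ℝ) (g : V3 → ℝ) (x : V3) : ℝ := ∫ y in Hplus, g y * molM η ε x y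

/-- The operator I_α of (2.13). -/
def Ialpha (η : V3 → ℝ) (ε α : ℝ) (g : V3 → ℝ) (x : V3) : ℝ :=
  ∫ ξ in Ioi (0:ℝ), Real.exp (-(α * ξ)) *
    ∫ y in Hplus, g y * mol η ε (mk3 (x 0 - y 0) (x 1 - y 1) (x 2 + y 2 + ξ))

/-- The heat kernel Γ(x,t) = (4πt)^{-3/2} exp(-|x|²/(4t)) on ℝ³. -/
def heatK (x : V3) (t : ℝ) : ℝ :=
  (4 * Real.pi * t) ^ (-(3:ℝ)/2) * Real.exp (-‖x‖^2 / (4*t))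

/-- The even-even-odd extension of a (time-dependent) vector field on the
half space to all of ℝ³. -/
def extV (u : ℝ → V3 → V3) : ℝ → V3 → V3 :=
  fun t x => if 0 ≤ x 2 then u t x
    else mk3 (u t (refl3 x) 0) (u t (refl3 x) 1) (-(u t (refl3 x) 2))

/-- The corresponding extension of a (time-dependent) matrix field,
with signs ε_i ε_j. -/
def extM (F : ℝ → V3 → Fin 3 → Fin 3 → ℝ) : ℝ → V3 → Fin 3 → Fin 3 → ℝ :=
  fun t x i j => if 0 ≤ x 2 then F t x i j else sgn3 i * sgn3 j * F t (refl3 x) i j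

/-- The extension of a (time-dependent) scalar field, even in x₃. -/
def extS (pr : ℝ → V3 → ℝ) : ℝ → V3 → ℝ :=
  fun t x => if 0 ≤ x 2 then pr t x else pr t (refl3 x)

open scoped ENNReal

/-! ### Three integral inequalities -/

lemma rpow_sub_one_mul_self {p : ℝ} (hp : 1 < p) (a : ℝ≥0∞) : a ^ (p - 1) * a = a ^ p := by
  conv_rhs => rw [show p = (p - 1) + 1 by ring,
    ENNReal.rpow_add_of_nonneg _ _ (by linarith) zero_le_one, ENNReal.rpow_one]

/-- Hölder's inequality with weight `k`, applied to `k * g = k ^ (1 - 1/p) * (k ^ (1/p) * g)`. -/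
lemma lintegral_mul_rpow_le {α : Type*} [MeasurableSpace α] (μ : Measure α) {p : ℝ} (hp : 1 < p)
    {k g : α → ℝ≥0∞} (hk : Measurable k) (hg : Measurable g) :
    (∫⁻ a, k a * g a ∂μ) ^ p ≤ (∫⁻ a, k a ∂μ) ^ (p - 1) * ∫⁻ a, k a * g a ^ p ∂μ := by
  have hp0 : 0 < p := by linarith
  have hc := (Real.HolderConjugate.conjExponent hp).symm
  set p' := p.conjExponent with hp'
  have hp'0 : 0 < p' := hc.pos
  have key := ENNReal.lintegral_mul_le_Lp_mul_Lq μ hc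
    (f := fun a => k a ^ (1 / p')) (g := fun a => k a ^ (1 / p) * g a)
    (by fun_prop) (by fun_prop)
  have h1 : ∀ a, ((fun a => k a ^ (1 / p')) * fun a => k a ^ (1 / p) * g a) a = k a * g a := by
    intro a
    simp only [Pi.mul_apply]
    rw [← mul_assoc, ← ENNReal.rpow_add_of_nonneg _ _ (by positivity) (by positivity)]
    have : 1 / p' + 1 / p = 1 := by simpa [one_div] using hc.inv_add_inv_eq_one
    rw [this, ENNReal.rpow_one]
  have h2 : ∀ a, (k a ^ (1 / p')) ^ p' = k a := by
    intro a
    rw [← ENNReal.rpow_mul, one_div_mul_cancel hp'0.ne', ENNReal.rpow_one]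
  have h3 : ∀ a, (k a ^ (1 / p) * g a) ^ p = k a * g a ^ p := by
    intro a
    rw [ENNReal.mul_rpow_of_nonneg _ _ hp0.le, ← ENNReal.rpow_mul, one_div_mul_cancel hp0.ne',
      ENNReal.rpow_one]
  simp only [h1, h2, h3] at key
  calc _ ≤ ((∫⁻ a, k a ∂μ) ^ (1 / p') * (∫⁻ a, k a * g a ^ p ∂μ) ^ (1 / p)) ^ p := by gcongr
    _ = _ := by
      rw [ENNReal.mul_rpow_of_nonneg _ _ hp0.le, ← ENNReal.rpow_mul, ← ENNReal.rpow_mul,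
        one_div_mul_cancel hp0.ne', ENNReal.rpow_one]
      congr 2
      rw [hp', Real.conjExponent]
      field_simp

/-- A form of Minkowski's integral inequality: if the `L^p` norm of each slice `F s` is at most
`M s`, then the `L^p` norm of `∫ F s ds` is at most `∫ M s ds`. It follows from the weighted Hölder
inequality with weight `M`, after writing `F = M * (M⁻¹ * F)`; the hypotheses `hM0` and `hMtop` make
this factorisation legitimate. -/
lemma lintegral_lintegral_rpow_le {S X : Type*} [MeasurableSpace S] [MeasurableSpace X]
    (σ : Measure S) (ξ : Measure X) [SFinite σ] [SFinite ξ] {p : ℝ} (hp : 1 < p)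
    {F : S → X → ℝ≥0∞} (hF : Measurable (Function.uncurry F)) {M : S → ℝ≥0∞} (hM : Measurable M)
    (hFM : ∀ᵐ s ∂σ, ∫⁻ x, F s x ^ p ∂ξ ≤ M s ^ p)
    (hM0 : ∀ᵐ s ∂σ, M s = 0 → ∀ x, F s x = 0) (hMtop : ∀ᵐ s ∂σ, M s ≠ ⊤) :
    ∫⁻ x, (∫⁻ s, F s x ∂σ) ^ p ∂ξ ≤ (∫⁻ s, M s ∂σ) ^ p := by
  have hp0 : 0 < p := by linarith
  have hFx : ∀ x, Measurable fun s => F s x := fun x => hF.comp (measurable_id.prodMk measurable_const)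
  have hFs : ∀ s, Measurable (F s) := fun s => hF.comp (measurable_const.prodMk measurable_id)
  have h1 : ∀ x, (∫⁻ s, F s x ∂σ) ^ p ≤
      (∫⁻ s, M s ∂σ) ^ (p - 1) * ∫⁻ s, M s * ((M s)⁻¹ * F s x) ^ p ∂σ := by
    intro x
    refine le_trans ?_ (lintegral_mul_rpow_le σ hp hM ((hM.inv).mul (hFx x)))
    gcongr ?_ ^ p
    refine lintegral_mono_ae ?_
    filter_upwards [hM0, hMtop] with s h0 ht
    by_cases hz : M s = 0
    · simp [h0 hz x]
    · rw [← mul_assoc, ENNReal.mul_inv_cancel hz ht, one_mul]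
  calc ∫⁻ x, (∫⁻ s, F s x ∂σ) ^ p ∂ξ
      ≤ ∫⁻ x, (∫⁻ s, M s ∂σ) ^ (p - 1) * ∫⁻ s, M s * ((M s)⁻¹ * F s x) ^ p ∂σ ∂ξ :=
        lintegral_mono h1
    _ = (∫⁻ s, M s ∂σ) ^ (p - 1) * ∫⁻ x, ∫⁻ s, M s * ((M s)⁻¹ * F s x) ^ p ∂σ ∂ξ := by
        rw [lintegral_const_mul]
        refine Measurable.lintegral_prod_right' (f := fun z : X × S =>
          M z.2 * ((M z.2)⁻¹ * F z.2 z.1) ^ p) ?_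
        have := hF.comp measurable_swap
        simp only [Function.comp_def, Function.uncurry, Prod.fst_swap, Prod.snd_swap] at this
        fun_prop
    _ = (∫⁻ s, M s ∂σ) ^ (p - 1) * ∫⁻ s, ∫⁻ x, M s * ((M s)⁻¹ * F s x) ^ p ∂ξ ∂σ := by
        rw [lintegral_lintegral_swap]
        have := hF.comp measurable_swap
        simp only [Function.comp_def, Function.uncurry, Prod.fst_swap, Prod.snd_swap] at this
        simp only [Function.uncurry_def]
        fun_prop
    _ ≤ (∫⁻ s, M s ∂σ) ^ (p - 1) * ∫⁻ s, M s ∂σ := by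
        refine mul_le_mul_right (lintegral_mono_ae ?_) _
        filter_upwards [hFM, hMtop] with s hs ht
        by_cases hz : M s = 0
        · simp [hz]
        have : ∀ x, M s * ((M s)⁻¹ * F s x) ^ p = (M s * ((M s)⁻¹) ^ p) * F s x ^ p := by
          intro x
          rw [ENNReal.mul_rpow_of_nonneg _ _ hp0.le, mul_assoc]
        simp only [this]
        rw [lintegral_const_mul _ ((hFs s).pow_const p)]
        calc _ ≤ (M s * ((M s)⁻¹) ^ p) * M s ^ p := by gcongr
          _ = M s := by
            rw [mul_assoc, ← ENNReal.mul_rpow_of_nonneg _ _ hp0.le, ENNReal.inv_mul_cancel hz ht,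
              ENNReal.one_rpow, mul_one]
    _ = _ := rpow_sub_one_mul_self hp _

/-- Young's convolution inequality `L¹ * L^p ⊆ L^p` on a set of times. -/
lemma lintegral_conv_rpow_le (I : Set ℝ) {p : ℝ} (hp : 1 < p) {ψ H : ℝ → ℝ≥0∞}
    (hψ : Measurable ψ) (hH : Measurable H) :
    ∫⁻ t in I, (∫⁻ s in I, ψ (t - s) * H s) ^ p ≤ (∫⁻ τ, ψ τ) ^ p * ∫⁻ s in I, H s ^ p := by
  have h1 : ∀ t, (∫⁻ s in I, ψ (t - s) * H s) ^ p ≤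
      (∫⁻ τ, ψ τ) ^ (p - 1) * ∫⁻ s in I, ψ (t - s) * H s ^ p := by
    intro t
    refine (lintegral_mul_rpow_le _ hp (by fun_prop) hH).trans ?_
    gcongr ?_ ^ _ * _
    exact (setLIntegral_le_lintegral _ _).trans_eq (lintegral_sub_left_eq_self ψ t)
  calc _ ≤ ∫⁻ t in I, (∫⁻ τ, ψ τ) ^ (p - 1) * ∫⁻ s in I, ψ (t - s) * H s ^ p := lintegral_mono h1
    _ = (∫⁻ τ, ψ τ) ^ (p - 1) * ∫⁻ s in I, ∫⁻ t in I, ψ (t - s) * H s ^ p := by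
      rw [lintegral_const_mul, lintegral_lintegral_swap]
      · simp only [Function.uncurry_def]; fun_prop
      · exact Measurable.lintegral_prod_right' (f := fun z : ℝ × ℝ => ψ (z.1 - z.2) * H z.2 ^ p)
          (by fun_prop)
    _ ≤ (∫⁻ τ, ψ τ) ^ (p - 1) * ∫⁻ s in I, (∫⁻ τ, ψ τ) * H s ^ p := by
      gcongr with s
      rw [lintegral_mul_const _ (by fun_prop)]
      refine mul_le_mul_left ?_ _
      exact (setLIntegral_le_lintegral _ _).trans_eq (lintegral_sub_right_eq_self ψ s)
    _ = _ := by
      rw [lintegral_const_mul _ (by fun_prop), ← mul_assoc]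
      rw [rpow_sub_one_mul_self hp]
/-! ### The kernel `∂₃Γ` -/

/-- The normal factor `z/(2τ) (4πτ)^{-1/2} e^{-z²/(4τ)}` of `|∂₃Γ|`, as an extended nonnegative
real. -/
def kN (z τ : ℝ) : ℝ≥0∞ :=
  ENNReal.ofReal (z / (2 * τ) * (4 * Real.pi * τ) ^ (-(1:ℝ)/2) * Real.exp (-z ^ 2 / (4 * τ)))

/-- The tangential factor of `|∂₃Γ|`: the heat kernel `(4πτ)⁻¹ e^{-|a|²/(4τ)}` of `ℝ²`. -/
def gT (a : ℝ × ℝ) (τ : ℝ) : ℝ≥0∞ :=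
  ENNReal.ofReal ((4 * Real.pi * τ)⁻¹ * Real.exp (-(a.1 ^ 2 + a.2 ^ 2) / (4 * τ)))

lemma measurable_kN : Measurable (Function.uncurry kN) := by
  unfold kN Function.uncurry; fun_prop

lemma measurable_gT : Measurable (Function.uncurry gT) := by
  unfold gT Function.uncurry; fun_prop

lemma pd_heatK (τ : ℝ) (z : V3) :
    pd 2 (fun z => heatK z τ) z = -(z 2 / (2 * τ)) * heatK z τ := by
  have h1 : HasFDerivAt (fun z : V3 => ‖z‖ ^ 2) (2 • innerSL ℝ z) z := (hasStrictFDerivAt_norm_sq z).hasFDerivAt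
  have h2 : HasFDerivAt (fun z : V3 => -‖z‖ ^ 2 / (4 * τ)) ((4 * τ)⁻¹ • -((2 : ℕ) • innerSL ℝ z : V3 →L[ℝ] ℝ)) z := by
    simpa [div_eq_inv_mul] using (h1.neg).const_mul ((4 * τ)⁻¹)
  have h3 := (h2.exp).const_mul ((4 * Real.pi * τ) ^ (-(3:ℝ)/2))
  unfold pd heatK
  rw [h3.fderiv]
  have : inner ℝ z (e3 2) = z 2 := by simp [e3, EuclideanSpace.inner_single_right]
  simp only [smul_apply, neg_apply, innerSL_apply_apply, this, smul_eq_mul, nsmul_eq_mul]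
  have : (4 * τ)⁻¹ = (2 * τ)⁻¹ / 2 := by
    rw [show 4 * τ = 2 * τ * 2 by ring, mul_inv]; rfl
  rw [this]
  push_cast
  ring

lemma enorm_pd_heatK {τ z : ℝ} (hτ : 0 < τ) (hz : 0 < z) (a b : ℝ) :
    ‖pd 2 (fun z => heatK z τ) (mk3 a b z)‖ₑ = kN z τ * gT (a, b) τ := by
  have hπ := Real.pi_pos
  have hn : ‖mk3 a b z‖ ^ 2 = a ^ 2 + b ^ 2 + z ^ 2 := by
    simp [mk3, EuclideanSpace.norm_sq_eq, Fin.sum_univ_three]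
  have h2 : (mk3 a b z) 2 = z := by simp [mk3]
  rw [pd_heatK, h2, heatK, hn, kN, gT, ← ENNReal.ofReal_mul (by positivity), Real.enorm_eq_ofReal_abs]
  congr 1
  rw [abs_mul, abs_neg, abs_of_pos (by positivity), abs_of_pos (by positivity)]
  have e1 : Real.exp (-(a ^ 2 + b ^ 2 + z ^ 2) / (4 * τ)) =
      Real.exp (-z ^ 2 / (4 * τ)) * Real.exp (-(a ^ 2 + b ^ 2) / (4 * τ)) := by
    rw [← Real.exp_add]; congr 1; ring
  have e2 : (4 * Real.pi * τ) ^ (-(3:ℝ)/2) = (4 * Real.pi * τ) ^ (-(1:ℝ)/2) * (4 * Real.pi * τ)⁻¹ := by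
    rw [← Real.rpow_neg_one, ← Real.rpow_add (by positivity)]; norm_num
  rw [e1, e2]; ring

lemma lintegral_gT {τ : ℝ} (hτ : 0 < τ) : ∫⁻ a, gT a τ = 1 := by
  have hπ := Real.pi_pos
  set c := (4 * τ)⁻¹ with hc
  have hc0 : 0 < c := by positivity
  have h1 : ∫⁻ x : ℝ, ENNReal.ofReal (Real.exp (-c * x ^ 2)) = ENNReal.ofReal (√(Real.pi / c)) := by
    rw [← ofReal_integral_eq_lintegral_ofReal (integrable_exp_neg_mul_sq hc0)
      (ae_of_all _ fun x => by positivity), integral_gaussian]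
  have h2 : ∀ a : ℝ × ℝ, gT a τ = ENNReal.ofReal ((4 * Real.pi * τ)⁻¹) *
      (ENNReal.ofReal (Real.exp (-c * a.1 ^ 2)) * ENNReal.ofReal (Real.exp (-c * a.2 ^ 2))) := by
    intro a
    rw [gT, ← ENNReal.ofReal_mul (by positivity), ← ENNReal.ofReal_mul (by positivity), ← Real.exp_add]
    congr 3
    rw [hc]; field_simp; ring
  simp only [h2]
  rw [lintegral_const_mul _ (by fun_prop)]
  rw [Measure.volume_eq_prod, lintegral_prod_mul (f := fun x : ℝ => ENNReal.ofReal (Real.exp (-c * x ^ 2))) (g := fun x : ℝ => ENNReal.ofReal (Real.exp (-c * x ^ 2))) (by fun_prop) (by fun_prop), h1, ← ENNReal.ofReal_mul (by positivity), ← ENNReal.ofReal_mul (by positivity), Real.mul_self_sqrt (by positivity)]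
  rw [hc, ← ENNReal.ofReal_one]; congr 1; field_simp

/-- The constant in `∫₀^∞ kN(z,τ)^q dz = cN(q) τ^{1/2-q}`. -/
def cN (q : ℝ) : ℝ :=
  2⁻¹ ^ q * (4 * Real.pi) ^ (-q / 2) * ((q / 4) ^ (-(q + 1) / 2) * (1 / 2) * Real.Gamma ((q + 1) / 2))

lemma lintegral_kN {q τ : ℝ} (hq : 1 < q) (hτ : 0 < τ) :
    ∫⁻ z in Ioi 0, kN z τ ^ q = ENNReal.ofReal (cN q * τ ^ (1 / 2 - q)) := by
  have hπ := Real.pi_pos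
  have hb : 0 < q / (4 * τ) := by positivity
  have h1 : ∀ z ∈ Ioi (0:ℝ), kN z τ ^ q = ENNReal.ofReal ((2⁻¹ ^ q * (4 * Real.pi) ^ (-q / 2) * τ ^ (-(3 / 2) * q)) * (z ^ q * Real.exp (-(q / (4 * τ)) * z ^ (2 : ℝ)))) := by
    intro z hz
    have hz : 0 < z := hz
    rw [kN, ENNReal.ofReal_rpow_of_nonneg (by positivity) (by linarith)]
    congr 1
    rw [Real.mul_rpow (by positivity) (by positivity), Real.mul_rpow (by positivity) (by positivity),
      ← Real.exp_mul, ← Real.rpow_mul (by positivity), Real.mul_rpow (x := 4 * Real.pi) (by positivity) (by positivity)]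
    rw [show z / (2 * τ) = z * 2⁻¹ * τ⁻¹ by field_simp, Real.mul_rpow (by positivity) (by positivity), Real.mul_rpow (by positivity) (by positivity), ← Real.rpow_neg_one τ, ← Real.rpow_mul (by positivity)]
    rw [show -(3 / 2) * q = -1 * q + -1 / 2 * q by ring, Real.rpow_add hτ, show -q / 2 = -1 / 2 * q by ring]
    rw [show -z ^ 2 / (4 * τ) * q = -(q / (4 * τ)) * z ^ (2 : ℝ) by rw [Real.rpow_two]; ring]
    ring
  rw [setLIntegral_congr_fun measurableSet_Ioi h1, ← ofReal_integral_eq_lintegral_ofReal]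
  · rw [integral_const_mul, integral_rpow_mul_exp_neg_mul_rpow (by norm_num) (by linarith) hb]
    congr 1
    rw [cN, show q / (4 * τ) = q / 4 * τ⁻¹ by field_simp, Real.mul_rpow (x := q / 4) (by positivity) (by positivity), ← Real.rpow_neg_one τ, ← Real.rpow_mul hτ.le,
      show 1 / 2 - q = -(3 / 2) * q + -1 * (-(q + 1) / 2) by ring, Real.rpow_add hτ]
    ring
  · exact (integrableOn_rpow_mul_exp_neg_mul_rpow (by linarith) (by norm_num) hb).const_mul _
  · filter_upwards [ae_restrict_mem measurableSet_Ioi] with z hz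
    have hz : 0 < z := hz
    positivity

lemma cN_pos {q : ℝ} (hq : 1 < q) : 0 < cN q := by
  have hπ := Real.pi_pos
  have : 0 < Real.Gamma ((q + 1) / 2) := Real.Gamma_pos_of_pos (by linarith)
  unfold cN; positivity

/-- The time kernel: `‖kN(·,τ)‖_{L^q(0,∞)} = cN(q)^{1/q} τ^{1/(2q)-1}` for `0 < τ < 1`, extended by
zero. The exponent exceeds `-1`, so the kernel is integrable. -/
def psiT (q τ : ℝ) : ℝ≥0∞ :=
  (Ioo (0:ℝ) 1).indicator (fun τ => ENNReal.ofReal (cN q ^ (1 / q) * τ ^ (1 / (2 * q) - 1))) τ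

lemma measurable_psiT (q : ℝ) : Measurable (psiT q) :=
  Measurable.indicator (by fun_prop) measurableSet_Ioo

lemma psiT_ne_top (q τ : ℝ) : psiT q τ ≠ ⊤ := by
  unfold psiT indicator; split_ifs <;> simp

lemma psiT_rpow {q τ : ℝ} (hq : 1 < q) (hτ : τ ∈ Ioo (0:ℝ) 1) :
    psiT q τ ^ q = ∫⁻ z in Ioi 0, kN z τ ^ q := by
  have := cN_pos hq
  have h0 : 0 < τ := hτ.1
  rw [lintegral_kN hq hτ.1, psiT, indicator_of_mem hτ, ENNReal.ofReal_rpow_of_nonneg (by positivity) (by linarith),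
    Real.mul_rpow (by positivity) (by positivity), ← Real.rpow_mul (by positivity), ← Real.rpow_mul (by positivity), one_div_mul_cancel (by linarith), Real.rpow_one]
  congr 3
  field_simp

lemma psiT_ne_zero {q τ : ℝ} (hq : 1 < q) (hτ : τ ∈ Ioo (0:ℝ) 1) : psiT q τ ≠ 0 := by
  have := cN_pos hq
  have h0 : 0 < τ := hτ.1
  rw [psiT, indicator_of_mem hτ]
  simp only [ne_eq, ENNReal.ofReal_eq_zero, not_le]
  positivity

lemma lintegral_psiT_ne_top {q : ℝ} (hq : 1 < q) : ∫⁻ τ, psiT q τ ≠ ⊤ := by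
  unfold psiT
  rw [lintegral_indicator measurableSet_Ioo]
  have h : IntegrableOn (fun τ : ℝ => cN q ^ (1 / q) * τ ^ (1 / (2 * q) - 1)) (Ioo 0 1) := by
    have hi := intervalIntegral.intervalIntegrable_rpow' (a := 0) (b := 1)
      (r := 1 / (2 * q) - 1) (by have : 0 < 1 / (2 * q) := by positivity
                                 linarith)
    rw [intervalIntegrable_iff_integrableOn_Ioo_of_le zero_le_one] at hi
    exact hi.const_mul _
  exact h.lintegral_lt_top.ne

/-! ### Coordinates on the half space -/

lemma measurePreserving_coord :
    MeasurePreserving (fun x : V3 => (x 2, (x 0, x 1))) volume (volume : Measure (ℝ × (ℝ × ℝ))) := by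
  have h1 := EuclideanSpace.volume_preserving_symm_measurableEquiv_toLp (Fin 3)
  have h2 := volume_preserving_piFinSuccAbove (fun _ : Fin 3 => ℝ) 2
  have h3 := (MeasurePreserving.id (volume : Measure ℝ)).prod (volume_preserving_finTwoArrow ℝ)
  exact h3.comp (h2.comp h1)

lemma lintegral_Hplus {f : ℝ × (ℝ × ℝ) → ℝ≥0∞} (hf : Measurable f) :
    ∫⁻ x in Hplus, f (x 2, (x 0, x 1)) = ∫⁻ y, f y ∂((volume.restrict (Ioi (0:ℝ))).prod volume) := by
  have := measurePreserving_coord.setLIntegral_comp_preimage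
    (s := Ioi (0:ℝ) ×ˢ univ) (measurableSet_Ioi.prod MeasurableSet.univ) hf
  rw [Measure.volume_eq_prod, ← Measure.prod_restrict, Measure.restrict_univ] at this
  rw [← this]
  congr 2
  ext x; simp [Hplus]

lemma measurableSet_Hplus : MeasurableSet Hplus :=
  measurableSet_lt measurable_const (by fun_prop)

/-- No integrability is needed: the left side is `0` if `f` is not integrable. -/
lemma ofReal_integral_le_lintegral {α : Type*} [MeasurableSpace α] {μ : Measure α} (f : α → ℝ)
    (hf : ∀ a, 0 ≤ f a) : ENNReal.ofReal (∫ a, f a ∂μ) ≤ ∫⁻ a, ENNReal.ofReal (f a) ∂μ := by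
  have := enorm_integral_le_lintegral_enorm (μ := μ) f
  rw [Real.enorm_of_nonneg (integral_nonneg hf)] at this
  simpa only [Real.enorm_of_nonneg (hf _)] using this

/-! ### The potential of a single time slice -/

/-- The potential at `(y', y₃)` (written `y = (y₃, y')`), after a time `τ`, of a density `g` on the
boundary plane at a single instant, with kernel `|∂₃Γ|`. -/
def layer (g : ℝ × ℝ → ℝ≥0∞) (τ : ℝ) (y : ℝ × (ℝ × ℝ)) : ℝ≥0∞ :=
  ∫⁻ p, kN y.1 τ * gT (y.2 - p) τ * g p

/-- Since `gT` has integral one, tangential convolution does not increase the `L^q` norm, and only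
the normal factor contributes to the constant. -/
lemma lintegral_layer_rpow_le {q τ : ℝ} (hq : 1 < q) (hτ : 0 < τ) {g : ℝ × ℝ → ℝ≥0∞}
    (hg : Measurable g) :
    ∫⁻ y, layer g τ y ^ q ∂((volume.restrict (Ioi (0:ℝ))).prod volume) ≤
      (∫⁻ z in Ioi 0, kN z τ ^ q) * ∫⁻ p, g p ^ q := by
  have hgT : Measurable fun a : ℝ × ℝ => gT a τ :=
    measurable_gT.comp (measurable_id.prodMk measurable_const)
  have hkN : Measurable fun z : ℝ => kN z τ :=
    measurable_kN.comp (measurable_id.prodMk measurable_const)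
  have h1 : ∀ y : ℝ × (ℝ × ℝ), layer g τ y ^ q ≤
      kN y.1 τ ^ q * ∫⁻ p, gT (y.2 - p) τ * g p ^ q := by
    intro y
    have e : layer g τ y = kN y.1 τ * ∫⁻ p, gT (y.2 - p) τ * g p := by
      rw [layer, ← lintegral_const_mul _ (by fun_prop)]
      simp only [mul_assoc]
    rw [e, ENNReal.mul_rpow_of_nonneg _ _ (by linarith)]
    refine mul_le_mul_right ((lintegral_mul_rpow_le _ hq (by fun_prop) hg).trans_eq ?_) _
    rw [lintegral_sub_left_eq_self (fun a => gT a τ), lintegral_gT hτ, ENNReal.one_rpow, one_mul]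
  refine (lintegral_mono h1).trans_eq ?_
  have hm : Measurable fun a : ℝ × ℝ => ∫⁻ p, gT (a - p) τ * g p ^ q :=
    Measurable.lintegral_prod_right' (f := fun z : (ℝ × ℝ) × (ℝ × ℝ) =>
      gT (z.1 - z.2) τ * g z.2 ^ q) (by fun_prop)
  rw [lintegral_prod_mul (f := fun z => kN z τ ^ q)
    (g := fun a : ℝ × ℝ => ∫⁻ p, gT (a - p) τ * g p ^ q) (by fun_prop) hm.aemeasurable]
  congr 1
  rw [lintegral_lintegral_swap (by simp only [Function.uncurry_def]; fun_prop)]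
  refine lintegral_congr fun p => ?_
  rw [lintegral_mul_const _ (by fun_prop),
    lintegral_sub_right_eq_self (fun a => gT a τ), lintegral_gT hτ, one_mul]

lemma layer_eq_zero {q : ℝ} (hq : 1 < q) {g : ℝ × ℝ → ℝ≥0∞} (hg : Measurable g)
    (h0 : ∫⁻ p, g p ^ q = 0) (τ : ℝ) (y : ℝ × (ℝ × ℝ)) : layer g τ y = 0 := by
  rw [lintegral_eq_zero_iff (by fun_prop)] at h0
  rw [layer, lintegral_eq_zero_iff' (by
    have hgT : Measurable fun a : ℝ × ℝ => gT a τ :=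
      measurable_gT.comp (measurable_id.prodMk measurable_const)
    fun_prop)]
  filter_upwards [h0] with p hp
  have : g p = 0 := by
    simpa [ENNReal.rpow_eq_zero_iff, (by linarith : 0 < q), (by linarith : ¬ q < 0)] using hp
  simp [this]

lemma measurable_layer {g : ℝ → ℝ × ℝ → ℝ≥0∞} (hg : Measurable (Function.uncurry g)) (t : ℝ) :
    Measurable (Function.uncurry fun s y => layer (g s) (t - s) y) := by
  refine Measurable.lintegral_prod_right' (f := fun z : (ℝ × (ℝ × (ℝ × ℝ))) × (ℝ × ℝ) =>
    kN z.1.2.1 (t - z.1.1) * gT (z.1.2.2 - z.2) (t - z.1.1) * g z.1.1 z.2) ?_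
  have m1 : Measurable fun z : (ℝ × (ℝ × (ℝ × ℝ))) × (ℝ × ℝ) => kN z.1.2.1 (t - z.1.1) :=
    measurable_kN.comp (f := fun z : (ℝ × (ℝ × (ℝ × ℝ))) × (ℝ × ℝ) => (z.1.2.1, t - z.1.1))
      (by fun_prop)
  have m2 : Measurable fun z : (ℝ × (ℝ × (ℝ × ℝ))) × (ℝ × ℝ) =>
      gT (z.1.2.2 - z.2) (t - z.1.1) :=
    measurable_gT.comp (f := fun z : (ℝ × (ℝ × (ℝ × ℝ))) × (ℝ × ℝ) =>
      (z.1.2.2 - z.2, t - z.1.1)) (by fun_prop)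
  have m3 : Measurable fun z : (ℝ × (ℝ × (ℝ × ℝ))) × (ℝ × ℝ) => g z.1.1 z.2 :=
    hg.comp (f := fun z : (ℝ × (ℝ × (ℝ × ℝ))) × (ℝ × ℝ) => (z.1.1, z.2)) (by fun_prop)
  exact (m1.mul m2).mul m3

/-- Minkowski's inequality in the source time `s`: at each time `t`, the `L^q` norm over the half
space of the superposed single layers is at most a time convolution with `psiT`. -/
lemma lintegral_sum_layer_le {q : ℝ} (hq : 1 < q) {g : ℝ → ℝ × ℝ → ℝ≥0∞}
    (hg : Measurable (Function.uncurry g))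
    (hfin : ∀ᵐ s ∂(volume.restrict (Ioo (-1:ℝ) 0)), ∫⁻ p, g s p ^ q ≠ ⊤)
    {t : ℝ} (ht : t ∈ Ioo (-1:ℝ) 0) :
    ∫⁻ y, (∫⁻ s in Ioo (-1) t, layer (g s) (t - s) y) ^ q
        ∂((volume.restrict (Ioi (0:ℝ))).prod volume) ≤
      (∫⁻ s in Ioo (-1) 0, psiT q (t - s) * (∫⁻ p, g s p ^ q) ^ (1 / q)) ^ q := by
  have hq0 : 0 < q := by linarith
  have hgs : ∀ s, Measurable (g s) := fun s => hg.comp (measurable_const.prodMk measurable_id)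
  have hsub : Ioo (-1:ℝ) t ⊆ Ioo (-1) 0 := Ioo_subset_Ioo_right ht.2.le
  have hA : Measurable fun s => ∫⁻ p, g s p ^ q :=
    Measurable.lintegral_prod_right' (f := fun z : ℝ × (ℝ × ℝ) => g z.1 z.2 ^ q)
      (hg.pow_const q)
  have hψ := measurable_psiT q
  have hτ : ∀ᵐ s ∂(volume.restrict (Ioo (-1:ℝ) t)), t - s ∈ Ioo (0:ℝ) 1 := by
    filter_upwards [ae_restrict_mem measurableSet_Ioo] with s hs
    exact ⟨by linarith [hs.2], by linarith [hs.1, ht.2]⟩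
  have hfin' := ae_restrict_of_ae_restrict_of_subset hsub hfin
  refine (lintegral_lintegral_rpow_le (volume.restrict (Ioo (-1) t)) _ hq
    (F := fun s y => layer (g s) (t - s) y)
    (M := fun s => psiT q (t - s) * (∫⁻ p, g s p ^ q) ^ (1 / q))
    ?_ (by fun_prop) ?_ ?_ ?_).trans ?_
  · exact measurable_layer hg t
  · filter_upwards [hτ] with s hs
    refine (lintegral_layer_rpow_le hq hs.1 (hgs s)).trans_eq ?_
    rw [ENNReal.mul_rpow_of_nonneg _ _ hq0.le, psiT_rpow hq hs, ← ENNReal.rpow_mul,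
      one_div_mul_cancel hq0.ne', ENNReal.rpow_one]
  · filter_upwards [hτ] with s hs h0 y
    refine layer_eq_zero hq (hgs s) ?_ _ y
    simpa [psiT_ne_zero hq hs, ENNReal.rpow_eq_zero_iff, hq0, hq0.le, hq0.not_gt] using h0
  · filter_upwards [hfin'] with s hs
    exact ENNReal.mul_ne_top (psiT_ne_top _ _) (ENNReal.rpow_ne_top_of_nonneg (by positivity) hs)
  · gcongr

/-! ### The estimate -/

/-- **Estimate (A.5) (Poisson kernel estimate).**  Let 1<q,r<∞.  There is
C = C(q,r) such that for h ∈ L^r(-1,0;L^q(ℝ²)), the function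
w(x,t) = ∫_{-1}^t ∫_{ℝ²} ∂_{x₃}Γ(x'-y',x₃,t-s) h(y',s) dy' ds satisfies
‖w‖_{L^{q,r}(ℝ³₊×(-1,0))} ≤ C ‖h‖_{L^r(-1,0;L^q(ℝ²))}. -/
theorem poisson_kernel_estimate
    (q r : ℝ) (hq : 1 < q) (hr : 1 < r) :
    ∃ C : ℝ, 0 < C ∧
      ∀ h : ℝ → ℝ × ℝ → ℝ,
        MemLqr q r (univ : Set (ℝ × ℝ)) (Ioo (-1) 0) h →
        ∀ w : ℝ → V3 → ℝ,
        (∀ t x, w t x =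
          ∫ s in Ioo (-1) t, ∫ p : ℝ × ℝ,
            pd 2 (fun z => heatK z (t - s)) (mk3 (x 0 - p.1) (x 1 - p.2) (x 2))
              * h s p) →
        LqrNorm q r Hplus (Ioo (-1) 0) w
          ≤ C * LqrNorm q r (univ : Set (ℝ × ℝ)) (Ioo (-1) 0) h := by
  have hq0 : 0 < q := by linarith
  have hr0 : 0 < r := by linarith
  set Ψ := ∫⁻ τ, psiT q τ with hΨ
  have hΨt : Ψ ≠ ⊤ := lintegral_psiT_ne_top hq
  refine ⟨Ψ.toReal + 1, by positivity, ?_⟩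
  rintro h ⟨hmeas, hint, hint2⟩ w hw
  simp only [Measure.restrict_univ] at hmeas hint2
  simp only [integrableOn_univ] at hint
  set I := Ioo (-1:ℝ) 0 with hI
  -- A jointly measurable representative `h'` agrees with `h` on almost every time slice.
  obtain ⟨h', hh', hae⟩ := hmeas
  have hae' := Measure.ae_ae_of_ae_prod hae
  set g : ℝ → ℝ × ℝ → ℝ≥0∞ := fun s p => ‖h' (s, p)‖ₑ with hgdef
  have hg : Measurable (Function.uncurry g) := hh'.measurable.enorm
  have hA : Measurable fun s => ∫⁻ p, g s p ^ q :=
    Measurable.lintegral_prod_right' (f := fun z : ℝ × (ℝ × ℝ) => g z.1 z.2 ^ q)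
      (hg.pow_const q)
  have hψ := measurable_psiT q
  have hAeq : ∀ᵐ s ∂(volume.restrict I),
      ∫⁻ p, g s p ^ q = ENNReal.ofReal (∫ p, ‖h s p‖ ^ q) := by
    filter_upwards [hae', hint] with s hs hi
    rw [ofReal_integral_eq_lintegral_ofReal hi (ae_of_all _ fun p => by positivity)]
    refine lintegral_congr_ae ?_
    filter_upwards [hs] with p hp
    rw [← ENNReal.ofReal_rpow_of_nonneg (norm_nonneg _) hq0.le, ofReal_norm, hgdef, hp]
  have hfin : ∀ᵐ s ∂(volume.restrict I), ∫⁻ p, g s p ^ q ≠ ⊤ := by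
    filter_upwards [hAeq] with s hs
    rw [hs]; exact ENNReal.ofReal_ne_top
  have hwle : ∀ t ∈ I, ∀ x ∈ Hplus, ‖w t x‖ₑ ≤
      ∫⁻ s in Ioo (-1) t, layer (g s) (t - s) (x 2, (x 0, x 1)) := by
    intro t ht x hx
    have hsub : Ioo (-1:ℝ) t ⊆ I := Ioo_subset_Ioo_right ht.2.le
    rw [hw]
    refine (enorm_integral_le_lintegral_enorm _).trans (lintegral_mono_ae ?_)
    filter_upwards [ae_restrict_mem measurableSet_Ioo,
      ae_restrict_of_ae_restrict_of_subset hsub hae'] with s hs hhs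
    refine (enorm_integral_le_lintegral_enorm _).trans_eq (lintegral_congr_ae ?_)
    filter_upwards [hhs] with p hp
    rw [enorm_mul, enorm_pd_heatK (by linarith [hs.2]) hx, hp]
    rfl
  have hlayer : ∀ t ∈ I, ∫⁻ x in Hplus, ‖w t x‖ₑ ^ q ≤
      (∫⁻ s in I, psiT q (t - s) * (∫⁻ p, g s p ^ q) ^ (1 / q)) ^ q := by
    intro t ht
    refine le_trans ?_ (lintegral_sum_layer_le hq hg hfin ht)
    rw [← lintegral_Hplus]
    · refine setLIntegral_mono_ae' ?_ (ae_of_all _ fun x hx => ?_)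
      · exact measurableSet_Hplus
      · gcongr
        exact hwle t ht x hx
    · exact (Measurable.lintegral_prod_left' (measurable_layer hg t)).pow_const q
  have hX : ENNReal.ofReal (∫ t in I, (∫ x in Hplus, ‖w t x‖ ^ q) ^ (r / q)) ≤
      Ψ ^ r * ENNReal.ofReal (∫ t in I, (∫ p, ‖h t p‖ ^ q) ^ (r / q)) := by
    calc _ ≤ ∫⁻ t in I, (∫⁻ x in Hplus, ‖w t x‖ₑ ^ q) ^ (r / q) := by
          refine (ofReal_integral_le_lintegral _ fun t => by positivity).trans ?_
          refine lintegral_mono fun t => ?_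
          rw [← ENNReal.ofReal_rpow_of_nonneg (integral_nonneg fun x => by positivity)
            (by positivity)]
          gcongr
          refine (ofReal_integral_le_lintegral _ fun t => by positivity).trans_eq ?_
          refine lintegral_congr fun x => ?_
          rw [← ENNReal.ofReal_rpow_of_nonneg (norm_nonneg _) hq0.le, ofReal_norm]
      _ ≤ ∫⁻ t in I, (∫⁻ s in I, psiT q (t - s) * (∫⁻ p, g s p ^ q) ^ (1 / q)) ^ r := by
          refine setLIntegral_mono_ae' measurableSet_Ioo (ae_of_all _ fun t ht => ?_)
          calc _ ≤ ((∫⁻ s in I, psiT q (t - s) * (∫⁻ p, g s p ^ q) ^ (1 / q)) ^ q) ^ (r / q) := by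
                gcongr
                exact hlayer t ht
            _ = _ := by rw [← ENNReal.rpow_mul, mul_div_cancel₀ _ hq0.ne']
      _ ≤ Ψ ^ r * ∫⁻ s in I, ((∫⁻ p, g s p ^ q) ^ (1 / q)) ^ r :=
          lintegral_conv_rpow_le I hr hψ (by fun_prop)
      _ = _ := by
          rw [ofReal_integral_eq_lintegral_ofReal hint2
            (ae_of_all _ fun t => by positivity)]
          congr 1
          refine lintegral_congr_ae ?_
          filter_upwards [hAeq] with s hs
          rw [hs, ← ENNReal.rpow_mul, ENNReal.ofReal_rpow_of_nonneg
            (integral_nonneg fun x => by positivity) (by positivity)]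
          congr 2; ring
  have hY0 : 0 ≤ ∫ t in I, (∫ p, ‖h t p‖ ^ q) ^ (r / q) := integral_nonneg fun t => by positivity
  have hX0 : 0 ≤ ∫ t in I, (∫ x in Hplus, ‖w t x‖ ^ q) ^ (r / q) :=
    integral_nonneg fun t => by positivity
  unfold LqrNorm
  simp only [Measure.restrict_univ]
  set X := ∫ t in I, (∫ x in Hplus, ‖w t x‖ ^ q) ^ (r / q)
  set Y := ∫ t in I, (∫ p, ‖h t p‖ ^ q) ^ (r / q)
  have hXY : X ≤ Ψ.toReal ^ r * Y := by
    rw [← ENNReal.ofReal_toReal hΨt, ENNReal.ofReal_rpow_of_nonneg (by positivity) hr0.le,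
      ← ENNReal.ofReal_mul (by positivity)] at hX
    exact (ENNReal.ofReal_le_ofReal_iff (by positivity)).1 hX
  calc X ^ (1 / r) ≤ (Ψ.toReal ^ r * Y) ^ (1 / r) := by gcongr
    _ = Ψ.toReal * Y ^ (1 / r) := by
      rw [Real.mul_rpow (by positivity) hY0, ← Real.rpow_mul (by positivity),
        mul_one_div_cancel hr0.ne', Real.rpow_one]
    _ ≤ (Ψ.toReal + 1) * Y ^ (1 / r) := by gcongr; linarith

end
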